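/- Let r, s be natural numbers. Every connected component of the quotient of X = {(x, y) : (Fin r → ℝ) × (Fin s → ℝ) | x i ≠ y j for all i, j} by the permutation action of Perm(Fin r) × Perm(Fin s) is a contractible topological space. -/

import Mathlib

/-- The space of pairs of tuples `(x, y) ∈ ℝʳ × ℝˢ` with `xᵢ ≠ y_j` for all
`i, j` (with the subspace topology from the product). -/
abbrev TwoGroupConfig (r s : ℕ) : Type :=
  {p : (Fin r → ℝ) × (Fin s → ℝ) // ∀ i j, p.1 i ≠ p.2 j}

/-- The action of `Perm (Fin r) × Perm (Fin s)` permuting the coordinates of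
`x` and of `y`. -/
instance twoGroupConfigSMul (r s : ℕ) :
    SMul (Equiv.Perm (Fin r) × Equiv.Perm (Fin s)) (TwoGroupConfig r s) where
  smul g p := ⟨(p.1.1 ∘ ⇑g.1⁻¹, p.1.2 ∘ ⇑g.2⁻¹), fun _ _ => p.2 _ _⟩

instance twoGroupConfigMulAction (r s : ℕ) :
    MulAction (Equiv.Perm (Fin r) × Equiv.Perm (Fin s)) (TwoGroupConfig r s) where
  one_smul p := by
    apply Subtype.ext
    show (p.1.1 ∘ ⇑(1 : Equiv.Perm (Fin r))⁻¹, p.1.2 ∘ ⇑(1 : Equiv.Perm (Fin s))⁻¹) = p.1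
    simp [Function.comp_def]
  mul_smul g h p := by
    apply Subtype.ext
    show (p.1.1 ∘ ⇑(g.1 * h.1)⁻¹, p.1.2 ∘ ⇑(g.2 * h.2)⁻¹)
      = ((p.1.1 ∘ ⇑h.1⁻¹) ∘ ⇑g.1⁻¹, (p.1.2 ∘ ⇑h.2⁻¹) ∘ ⇑g.2⁻¹)
    simp [Function.comp_def]

/-- The unordered two-group configuration space `C_{r,s}(ℝ)`: the quotient of
`TwoGroupConfig r s` by the permutation action of `Σ_r × Σ_s`, with the
quotient topology. -/
abbrev TwoGroupConfigQuot (r s : ℕ) : Type :=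
  Quotient (MulAction.orbitRel (Equiv.Perm (Fin r) × Equiv.Perm (Fin s)) (TwoGroupConfig r s))

/-!
Sorting both groups of points picks one representative in each orbit, and it does so continuously,
so it embeds the quotient into `ℝʳ × ℝˢ`. No inequality between a sorted `xᵢ` and a sorted `yⱼ` can
change along a connected set, so the component of a configuration is cut out by monotonicity of both
tuples and by the inequalities that hold at that configuration. These conditions are linear, hence
the component is a nonempty convex set.
-/

open Set Topology

section Topology

variable {X Y : Type*} [TopologicalSpace X] [TopologicalSpace Y]

theorem connectedComponent_eq_of_isClopen_of_isPreconnected {C : Set X} (hC : IsClopen C)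
    (hconn : IsPreconnected C) {x : X} (hx : x ∈ C) : connectedComponent x = C :=
  (hC.connectedComponent_subset hx).antisymm (hconn.subset_connectedComponent hx)

theorem contractibleSpace_connectedComponent_of_isEmbedding {f : X → Y} (hf : IsEmbedding f)
    {C : Set Y} [ContractibleSpace C] (hrange : C ⊆ range f) (hclopen : IsClopen (f ⁻¹' C))
    {x : X} (hx : f x ∈ C) : ContractibleSpace (connectedComponent x) := by
  have hpre : ContractibleSpace (f ⁻¹' C) := (hf.homeomorphOfSubsetRange hrange).contractibleSpace
  have hconn : IsPreconnected (f ⁻¹' C) :=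
    isPreconnected_iff_preconnectedSpace.mpr inferInstance
  rwa [connectedComponent_eq_of_isClopen_of_isPreconnected hclopen hconn hx]

theorem isClopen_setOf_lt_of_forall_ne [LinearOrder Y] [OrderClosedTopology Y] {f g : X → Y}
    (hf : Continuous f) (hg : Continuous g) (hne : ∀ x, f x ≠ g x) :
    IsClopen {x | f x < g x} := by
  have heq : {x | f x < g x} = {x | f x ≤ g x} := ext fun x ↦ (hne x).le_iff_lt.symm
  exact ⟨heq ▸ isClosed_le hf hg, isOpen_lt hf hg⟩

theorem continuous_comp_sort {n : ℕ} [LinearOrder Y] [OrderClosedTopology Y] :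
    Continuous fun x : Fin n → Y ↦ x ∘ Tuple.sort x := by
  -- On each of the finitely many closed sets `{x | Monotone (x ∘ σ)}`, sorting is `x ↦ x ∘ σ`.
  have hcomp (σ : Equiv.Perm (Fin n)) : Continuous fun x : Fin n → Y ↦ x ∘ σ := by fun_prop
  refine (locallyFinite_of_finite fun σ : Equiv.Perm (Fin n) ↦
    {x : Fin n → Y | Monotone (x ∘ σ)}).continuous ?_ (fun σ ↦ ?_) (fun σ ↦ ?_)
  · exact iUnion_eq_univ_iff.mpr fun x ↦ ⟨Tuple.sort x, Tuple.monotone_sort x⟩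
  · exact isClosed_monotone.preimage (hcomp σ)
  · exact (hcomp σ).continuousOn.congr fun x hx ↦
      (Tuple.comp_sort_eq_comp_iff_monotone.mpr hx).symm

end Topology

theorem comp_sort_eq_self {n : ℕ} {α : Type*} [LinearOrder α] {x : Fin n → α} (hx : Monotone x) :
    x ∘ Tuple.sort x = x := by
  rw [Tuple.sort_eq_refl_iff_monotone.mpr hx, Equiv.coe_refl, Function.comp_id]

section Convex

variable {𝕜 E β : Type*} [Semiring 𝕜] [PartialOrder 𝕜] [AddCommMonoid E] [Module 𝕜 E]
  [AddCommGroup β] [PartialOrder β] [IsOrderedAddMonoid β] [Module 𝕜 β]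

theorem convex_setOf_linearMap_le [PosSMulMono 𝕜 β] (f g : E →ₗ[𝕜] β) :
    Convex 𝕜 {x | f x ≤ g x} := by
  simpa only [LinearMap.sub_apply, sub_nonpos] using convex_halfSpace_le (f - g).isLinear 0

theorem convex_setOf_linearMap_lt [PosSMulStrictMono 𝕜 β] (f g : E →ₗ[𝕜] β) :
    Convex 𝕜 {x | f x < g x} := by
  simpa only [LinearMap.sub_apply, sub_neg] using convex_halfSpace_lt (f - g).isLinear 0

theorem convex_setOf_monotone {ι : Type*} [Preorder ι] [PosSMulMono 𝕜 β] :
    Convex 𝕜 {x : ι → β | Monotone x} := by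
  simp only [Monotone, ofPred_forall]
  exact convex_iInter fun i ↦ convex_iInter fun j ↦ convex_iInter fun _ ↦
    convex_setOf_linearMap_le (LinearMap.proj i : (ι → β) →ₗ[𝕜] β) (LinearMap.proj j)

end Convex

section InterleavingCell

variable {ι κ α : Type*} [Preorder ι] [Preorder κ]

/-- The pairs of monotone tuples whose entries interleave in the same way as those of `e`. The
interleaving is recorded by one-sided implications, so that the cell is visibly an intersection of
half-spaces; an equality `e.1 i = e.2 j` imposes no condition. -/
def interleavingCell [Preorder α] (e : (ι → α) × (κ → α)) : Set ((ι → α) × (κ → α)) :=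
  {p | (Monotone p.1 ∧ Monotone p.2) ∧
    (∀ i j, e.1 i < e.2 j → p.1 i < p.2 j) ∧ ∀ i j, e.2 j < e.1 i → p.2 j < p.1 i}

theorem interleavingCell_eq_inter [Preorder α] (e : (ι → α) × (κ → α)) :
    interleavingCell e = {p | Monotone p.1 ∧ Monotone p.2} ∩
      ((⋂ (i) (j) (_ : e.1 i < e.2 j), {p | p.1 i < p.2 j}) ∩
        ⋂ (i) (j) (_ : e.2 j < e.1 i), {p | p.2 j < p.1 i}) := by
  ext p
  simp only [interleavingCell, mem_ofPred_eq, mem_inter_iff, mem_iInter]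

theorem self_mem_interleavingCell [Preorder α] {e : (ι → α) × (κ → α)} (hfst : Monotone e.1)
    (hsnd : Monotone e.2) : e ∈ interleavingCell e :=
  ⟨⟨hfst, hsnd⟩, fun _ _ ↦ id, fun _ _ ↦ id⟩

theorem ne_of_mem_interleavingCell [LinearOrder α] {e p : (ι → α) × (κ → α)} {i : ι} {j : κ}
    (hp : p ∈ interleavingCell e) (he : e.1 i ≠ e.2 j) : p.1 i ≠ p.2 j :=
  he.lt_or_gt.elim (fun h ↦ (hp.2.1 i j h).ne) (fun h ↦ (hp.2.2 i j h).ne')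

theorem convex_interleavingCell {𝕜 : Type*} [Semiring 𝕜] [PartialOrder 𝕜] [AddCommGroup α]
    [PartialOrder α] [IsOrderedAddMonoid α] [Module 𝕜 α] [PosSMulStrictMono 𝕜 α]
    (e : (ι → α) × (κ → α)) : Convex 𝕜 (interleavingCell e) := by
  have hmono : Convex 𝕜 {p : (ι → α) × (κ → α) | Monotone p.1 ∧ Monotone p.2} :=
    convex_setOf_monotone.prod convex_setOf_monotone
  let fstAt (i : ι) : (ι → α) × (κ → α) →ₗ[𝕜] α := LinearMap.proj i ∘ₗ LinearMap.fst 𝕜 _ _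
  let sndAt (j : κ) : (ι → α) × (κ → α) →ₗ[𝕜] α := LinearMap.proj j ∘ₗ LinearMap.snd 𝕜 _ _
  rw [interleavingCell_eq_inter]
  refine hmono.inter (.inter ?_ ?_) <;>
    refine convex_iInter fun i ↦ convex_iInter fun j ↦ convex_iInter fun _ ↦ ?_
  · exact convex_setOf_linearMap_lt (fstAt i) (sndAt j)
  · exact convex_setOf_linearMap_lt (sndAt j) (fstAt i)

end InterleavingCell

namespace TwoGroupConfig

variable {r s : ℕ}

/-- The configuration obtained by sorting each of the two groups of points: a distinguished
representative of the orbit of `p`. -/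
noncomputable def sorted (p : TwoGroupConfig r s) : TwoGroupConfig r s :=
  ⟨(p.1.1 ∘ Tuple.sort p.1.1, p.1.2 ∘ Tuple.sort p.1.2), fun _ _ ↦ p.2 _ _⟩

theorem continuous_sorted : Continuous (sorted : TwoGroupConfig r s → TwoGroupConfig r s) :=
  ((continuous_comp_sort.comp continuous_fst).prodMk
    (continuous_comp_sort.comp continuous_snd)).comp continuous_subtype_val |>.subtype_mk _

theorem sorted_smul (g : Equiv.Perm (Fin r) × Equiv.Perm (Fin s)) (p : TwoGroupConfig r s) :
    sorted (g • p) = sorted p :=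
  Subtype.ext <| Prod.ext
    (Tuple.comp_perm_comp_sort_eq_comp_sort (f := p.1.1) (σ := g.1⁻¹))
    (Tuple.comp_perm_comp_sort_eq_comp_sort (f := p.1.2) (σ := g.2⁻¹))

theorem sorted_mem_orbit (p : TwoGroupConfig r s) :
    sorted p ∈ MulAction.orbit (Equiv.Perm (Fin r) × Equiv.Perm (Fin s)) p :=
  ⟨((Tuple.sort p.1.1)⁻¹, (Tuple.sort p.1.2)⁻¹), rfl⟩

theorem sorted_eq_self {p : TwoGroupConfig r s} (hfst : Monotone p.1.1) (hsnd : Monotone p.1.2) :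
    sorted p = p :=
  Subtype.ext <| Prod.ext (comp_sort_eq_self hfst) (comp_sort_eq_self hsnd)

end TwoGroupConfig

namespace TwoGroupConfigQuot

variable {r s : ℕ}

/-- The sorted representative of an unordered configuration: a continuous section of the quotient
map. -/
noncomputable def sortedRep : TwoGroupConfigQuot r s → TwoGroupConfig r s :=
  Quotient.lift TwoGroupConfig.sorted fun _ p ⟨g, hg⟩ ↦ hg ▸ TwoGroupConfig.sorted_smul g p

theorem continuous_sortedRep :
    Continuous (sortedRep : TwoGroupConfigQuot r s → TwoGroupConfig r s) :=
  TwoGroupConfig.continuous_sorted.quotient_lift _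

theorem leftInverse_mk_sortedRep :
    Function.LeftInverse (Quotient.mk _) (sortedRep : TwoGroupConfigQuot r s → _) :=
  fun q ↦ q.inductionOn fun p ↦ Quotient.sound p.sorted_mem_orbit

theorem isEmbedding_sortedRep :
    IsEmbedding (sortedRep : TwoGroupConfigQuot r s → TwoGroupConfig r s) :=
  leftInverse_mk_sortedRep.isEmbedding continuous_quotient_mk' continuous_sortedRep

theorem monotone_sortedRep (q : TwoGroupConfigQuot r s) :
    Monotone q.sortedRep.1.1 ∧ Monotone q.sortedRep.1.2 :=
  q.inductionOn fun _ ↦ ⟨Tuple.monotone_sort _, Tuple.monotone_sort _⟩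

theorem interleavingCell_subset_range_sortedRep (e : TwoGroupConfig r s) :
    interleavingCell e.1 ⊆ range fun q : TwoGroupConfigQuot r s ↦ q.sortedRep.1 := by
  intro p hp
  let config : TwoGroupConfig r s := ⟨p, fun i j ↦ ne_of_mem_interleavingCell hp (e.2 i j)⟩
  exact ⟨Quotient.mk _ config,
    congrArg Subtype.val (TwoGroupConfig.sorted_eq_self (p := config) hp.1.1 hp.1.2)⟩

theorem isClopen_sortedRep_preimage_interleavingCell (e : (Fin r → ℝ) × (Fin s → ℝ)) :
    IsClopen ((fun q : TwoGroupConfigQuot r s ↦ q.sortedRep.1) ⁻¹' interleavingCell e) := by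
  have hfst (i : Fin r) : Continuous fun q : TwoGroupConfigQuot r s ↦ q.sortedRep.1.1 i :=
    (by fun_prop : Continuous fun p : TwoGroupConfig r s ↦ p.1.1 i).comp continuous_sortedRep
  have hsnd (j : Fin s) : Continuous fun q : TwoGroupConfigQuot r s ↦ q.sortedRep.1.2 j :=
    (by fun_prop : Continuous fun p : TwoGroupConfig r s ↦ p.1.2 j).comp continuous_sortedRep
  have hmono : (fun q : TwoGroupConfigQuot r s ↦ q.sortedRep.1) ⁻¹'
      {p | Monotone p.1 ∧ Monotone p.2} = univ := eq_univ_of_forall monotone_sortedRep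
  rw [interleavingCell_eq_inter, preimage_inter, hmono, univ_inter]
  simp only [preimage_inter, preimage_iInter]
  refine .inter ?_ ?_ <;>
    refine isClopen_iInter_of_finite fun i ↦ isClopen_iInter_of_finite fun j ↦
      isClopen_iInter_of_finite fun _ ↦ ?_
  · exact isClopen_setOf_lt_of_forall_ne (hfst i) (hsnd j) fun q ↦ q.sortedRep.2 i j
  · exact isClopen_setOf_lt_of_forall_ne (hsnd j) (hfst i) fun q ↦ (q.sortedRep.2 i j).symm

end TwoGroupConfigQuot

/-- Every connected component of the two-group configuration space
`C_{r,s}(ℝ)` (the quotient of `{(x, y) : xᵢ ≠ y_j}` by `Σ_r × Σ_s`) is a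
contractible topological space. -/
theorem contractible_components_twoGroupConfig (r s : ℕ)
    (q : TwoGroupConfigQuot r s) :
    ContractibleSpace (connectedComponent q) := by
  have hmem : q.sortedRep.1 ∈ interleavingCell q.sortedRep.1 :=
    self_mem_interleavingCell q.monotone_sortedRep.1 q.monotone_sortedRep.2
  have hcell : ContractibleSpace (interleavingCell q.sortedRep.1) :=
    (convex_interleavingCell q.sortedRep.1).contractibleSpace ⟨_, hmem⟩
  exact contractibleSpace_connectedComponent_of_isEmbedding
    (IsEmbedding.subtypeVal.comp TwoGroupConfigQuot.isEmbedding_sortedRep)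
    (TwoGroupConfigQuot.interleavingCell_subset_range_sortedRep q.sortedRep)
    (TwoGroupConfigQuot.isClopen_sortedRep_preimage_interleavingCell q.sortedRep.1) hmem
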